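/- arXiv:1904.05096 — 2 statements merged into one kernel-verified Lean document; each statement's English description precedes it below -/
import Mathlib

section
/- Let G = (ℝ/ℤ)^d be a torus of any dimension d ≥ 1, equipped with its Haar probability measure μ_G, and let F₁, F₂, F₃ : G → [0,1] be measurable functions. Set δ_i := ∫_G F_i dμ_G for i = 1,2,3 and δ := min(δ₁, δ₂, δ₃). Then for any distinct integers m₁, m₂, m₃: if δ₁ + δ₂ + δ₃ ≤ 1 + 2δ, then ∫_G ∫_G F₁(x + m₁y) F₂(x + m₂y) F₃(x + m₃y) dμ_G(x) dμ_G(y) ≥ (1/4)·max(δ₁ + δ₂ + δ₃ − 1, 0)²; and if δ₁ + δ₂ + δ₃ > 1 + 2δ, then ∫_G ∫_G F₁(x + m₁y) F₂(x + m₂y) F₃(x + m₃y) dμ_G(x) dμ_G(y) ≥ δ·(δ₁ + δ₂ + δ₃ − 1 − δ). -/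
open Filter MeasureTheory
open scoped Classical

instance : Fact ((0 : ℝ) < 1) := ⟨one_pos⟩

/-- Haar probability measure on the torus `(ℝ/ℤ)^d`. -/
noncomputable def torusMeasure (d : ℕ) : Measure (Fin d → AddCircle (1 : ℝ)) :=
  Measure.pi fun _ => volume
namespace TorusKneser

set_option linter.unusedSectionVars false
set_option linter.unusedVariables false

/-- measurable functions with values in the unit interval -/
def U {G : Type*} [MeasurableSpace G] (f : G → ℝ) : Prop :=
  Measurable f ∧ ∀ x, f x ∈ Set.Icc (0 : ℝ) 1

/-- the twisted convolution -/
noncomputable def W {G : Type*} [AddCommGroup G] [MeasurableSpace G] (μ : Measure G) (p q : ℤ)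
    (f g : G → ℝ) (z : G) : ℝ := ∫ y, f (z + p • y) * g (z + q • y) ∂μ

/-- the truncated integral -/
noncomputable def Phi {G : Type*} [AddCommGroup G] [MeasurableSpace G] (μ : Measure G) (p q : ℤ)
    (g : G → ℝ) (t : ℝ) (f : G → ℝ) : ℝ := ∫ z, min (W μ p q f g z) t ∂μ

section basic
variable {X : Type*} [MeasurableSpace X] {ν : Measure X} [IsProbabilityMeasure ν]

lemma U.integrable {f : X → ℝ} (hf : U f) : Integrable f ν := by
  refine Integrable.of_bound hf.1.aestronglyMeasurable 1 (Eventually.of_forall fun x => ?_)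
  rw [Real.norm_eq_abs, abs_le]
  have := hf.2 x
  exact ⟨by linarith [this.1], this.2⟩

lemma U.mul {f g : X → ℝ} (hf : U f) (hg : U g) : U (fun x => f x * g x) :=
  ⟨hf.1.mul hg.1, fun x => ⟨mul_nonneg (hf.2 x).1 (hg.2 x).1,
    mul_le_one₀ (hf.2 x).2 (hg.2 x).1 (hg.2 x).2⟩⟩

lemma U.comp {Y : Type*} [MeasurableSpace Y] {f : X → ℝ} (hf : U f) {φ : Y → X}
    (hφ : Measurable φ) : U (fun y => f (φ y)) :=
  ⟨hf.1.comp hφ, fun y => hf.2 _⟩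

lemma U.integral_mem {f : X → ℝ} (hf : U f) : ∫ x, f x ∂ν ∈ Set.Icc (0 : ℝ) 1 := by
  constructor
  · exact integral_nonneg fun x => (hf.2 x).1
  · calc ∫ x, f x ∂ν ≤ ∫ x, (1 : ℝ) ∂ν :=
        integral_mono hf.integrable (integrable_const _) fun x => (hf.2 x).2
      _ = 1 := by simp

end basic

section group
variable {G : Type*} [AddCommGroup G] [TopologicalSpace G] [IsTopologicalAddGroup G]
  [CompactSpace G] [T2Space G] [MeasurableSpace G] [BorelSpace G]
  [SecondCountableTopology G] [DivisibleBy G ℤ]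
  {μ : Measure G} [μ.IsAddHaarMeasure] [IsProbabilityMeasure μ]

lemma integral_affine (f : G → ℝ) (hf : Measurable f) (z : G) {p : ℤ} (hp : p ≠ 0) :
    ∫ y, f (z + p • y) ∂μ = ∫ y, f y ∂μ := by
  have h1 := Measure.measurePreserving_zsmul μ hp
  have h2 := (measurePreserving_add_left μ z).comp h1
  have := h2.map_eq
  conv_rhs => rw [← this]
  rw [integral_map h2.measurable.aemeasurable hf.aestronglyMeasurable]
  rfl

lemma U.joint {f g : G → ℝ} (hf : U f) (hg : U g) (p q : ℤ) :
    U (fun zy : G × G => f (zy.1 + p • zy.2) * g (zy.1 + q • zy.2)) :=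
  (hf.comp (φ := fun zy : G × G => zy.1 + p • zy.2) (by fun_prop)).mul
    (hg.comp (φ := fun zy : G × G => zy.1 + q • zy.2) (by fun_prop))

lemma U.slice {f g : G → ℝ} (hf : U f) (hg : U g) (p q : ℤ) (z : G) :
    U (fun y : G => f (z + p • y) * g (z + q • y)) :=
  (hf.joint hg p q).comp (φ := fun y => (z, y)) (by fun_prop)

lemma U.W {f g : G → ℝ} (hf : U f) (hg : U g) (p q : ℤ) : U (W μ p q f g) := by
  constructor
  · exact ((hf.joint hg p q).1.stronglyMeasurable.integral_prod_right (ν := μ)).measurable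
  · intro z
    exact (hf.slice hg p q z).integral_mem

lemma W_le {f g : G → ℝ} (hf : U f) (hg : U g) {p : ℤ} (hp : p ≠ 0) (q : ℤ) (z : G) :
    W μ p q f g z ≤ ∫ x, f x ∂μ := by
  rw [← integral_affine f hf.1 z hp]
  refine integral_mono (hf.slice hg p q z).integrable
    (hf.comp (φ := fun y => z + p • y) (by fun_prop)).integrable fun y => ?_
  exact mul_le_of_le_one_right (hf.2 _).1 (hg.2 _).2

lemma le_W {f g : G → ℝ} (hf : U f) (hg : U g) {p q : ℤ} (hp : p ≠ 0) (hq : q ≠ 0) (z : G) :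
    ∫ x, f x ∂μ + ∫ x, g x ∂μ - 1 ≤ W μ p q f g z := by
  rw [← integral_affine f hf.1 z hp, ← integral_affine g hg.1 z hq]
  have i1 : Integrable (fun y => f (z + p • y)) μ :=
    (hf.comp (φ := fun y => z + p • y) (by fun_prop)).integrable
  have i2 : Integrable (fun y => g (z + q • y)) μ :=
    (hg.comp (φ := fun y => z + q • y) (by fun_prop)).integrable
  have : ∫ y, (f (z + p • y) + g (z + q • y) - 1) ∂μ ≤ W μ p q f g z := by
    refine integral_mono ((i1.add i2).sub (integrable_const _))
      (hf.slice hg p q z).integrable fun y => ?_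
    have h1 := (hf.2 (z + p • y)).2
    have h2 := (hg.2 (z + q • y)).2
    simp only
    nlinarith
  have e : ∫ y, (f (z + p • y) + g (z + q • y) - 1) ∂μ
      = ∫ y, f (z + p • y) ∂μ + ∫ y, g (z + q • y) ∂μ - 1 := by
    rw [integral_sub (f := fun y => f (z + p • y) + g (z + q • y)) (i1.add i2)
      (integrable_const _), integral_add i1 i2]
    simp
  rwa [e] at this

lemma integral_W {f g : G → ℝ} (hf : U f) (hg : U g) {p q : ℤ} (hpq : p ≠ q) :
    ∫ z, W μ p q f g z ∂μ = (∫ x, f x ∂μ) * ∫ x, g x ∂μ := by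
  unfold W
  rw [integral_integral_swap (hf.joint hg p q).integrable]
  have h1 : ∀ y, ∫ z, f (z + p • y) * g (z + q • y) ∂μ
      = ∫ z, f z * g (z + (q - p) • y) ∂μ := by
    intro y
    rw [← integral_add_right_eq_self (fun z => f z * g (z + (q - p) • y)) (p • y)]
    congr 1; ext z
    have e : z + p • y + (q - p) • y = z + q • y := by rw [sub_smul]; abel
    rw [e]
  simp_rw [h1]
  have hU : U (fun zy : G × G => f zy.1 * g (zy.1 + (q - p) • zy.2)) :=
    (hf.comp (φ := fun zy : G × G => zy.1) (by fun_prop)).mul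
    (hg.comp (φ := fun zy : G × G => zy.1 + (q - p) • zy.2) (by fun_prop))
  rw [integral_integral_swap (f := fun y z => f z * g (z + (q - p) • y))
    (hU.comp (φ := Prod.swap) measurable_swap).integrable]
  simp_rw [integral_const_mul]
  have h2 : ∀ z, ∫ y, g (z + (q - p) • y) ∂μ = ∫ y, g y ∂μ := fun z =>
    integral_affine g hg.1 z (sub_ne_zero.mpr hpq.symm)
  simp_rw [h2, integral_mul_const]

lemma U.minW {f g : G → ℝ} (hf : U f) (hg : U g) (p q : ℤ) {t : ℝ} (ht : t ∈ Set.Icc (0:ℝ) 1) :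
    U (fun z => min (TorusKneser.W μ p q f g z) t) := by
  have h := hf.W (μ := μ) hg p q
  exact ⟨h.1.min measurable_const, fun z => ⟨le_min (h.2 z).1 ht.1, (min_le_right _ _).trans ht.2⟩⟩

lemma min_submod {a b n u t : ℝ} (h : a + b = n + u) (ha : n ≤ a) (hb : n ≤ b) :
    min n t + min u t ≤ min a t + min b t := by
  rcases min_cases n t with h1 | h1 <;> rcases min_cases u t with h2 | h2 <;>
  rcases min_cases a t with h3 | h3 <;> rcases min_cases b t with h4 | h4 <;> linarith

lemma W_mono {f f' g : G → ℝ} (hf : U f) (hf' : U f') (hg : U g) (p q : ℤ) (z : G)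
    (h : ∀ x, f x ≤ f' x) : W μ p q f g z ≤ W μ p q f' g z :=
  integral_mono (hf.slice hg p q z).integrable (hf'.slice hg p q z).integrable fun y =>
    mul_le_mul_of_nonneg_right (h _) (hg.2 _).1

lemma Phi_submod {a b n u g : G → ℝ} (ha : U a) (hb : U b) (hn : U n) (hu : U u) (hg : U g)
    (p q : ℤ) {t : ℝ} (ht : t ∈ Set.Icc (0:ℝ) 1) (h : ∀ x, a x + b x = n x + u x)
    (hna : ∀ x, n x ≤ a x) (hnb : ∀ x, n x ≤ b x) :
    Phi μ p q g t n + Phi μ p q g t u ≤ Phi μ p q g t a + Phi μ p q g t b := by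
  unfold Phi
  rw [← integral_add (hn.minW hg p q ht).integrable (hu.minW hg p q ht).integrable,
    ← integral_add (ha.minW hg p q ht).integrable (hb.minW hg p q ht).integrable]
  refine integral_mono ((hn.minW hg p q ht).integrable.add (hu.minW hg p q ht).integrable)
    ((ha.minW hg p q ht).integrable.add (hb.minW hg p q ht).integrable) fun z => ?_
  refine min_submod ?_ (W_mono hn ha hg p q z hna) (W_mono hn hb hg p q z hnb)
  unfold W
  rw [← integral_add (hn.slice hg p q z).integrable (hu.slice hg p q z).integrable,
    ← integral_add (ha.slice hg p q z).integrable (hb.slice hg p q z).integrable]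
  congr 1; ext y
  rw [← add_mul, h, add_mul]

lemma Phi_shift (f g : G → ℝ) {p q : ℤ} (hpq : p ≠ q) (t : ℝ) (κ : G) :
    Phi μ p q g t (fun x => f (x + κ)) = Phi μ p q g t f := by
  set η : G := DivisibleBy.div κ (p - q) with hη
  have hκ : (p - q) • η = κ := DivisibleBy.div_cancel κ (sub_ne_zero.mpr hpq)
  have hW : ∀ z, W μ p q (fun x => f (x + κ)) g z = W μ p q f g (z + (-q) • η) := by
    intro z
    unfold W
    rw [← integral_add_right_eq_self
      (fun y => f (z + -q • η + p • y) * g (z + -q • η + q • y)) η]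
    congr 1; ext y
    have e1 : z + -q • η + p • (y + η) = z + p • y + κ := by
      rw [← hκ, sub_smul, smul_add, neg_smul]; abel
    have e2 : z + -q • η + q • (y + η) = z + q • y := by
      rw [smul_add, neg_smul]; abel
    rw [e1, e2]
  unfold Phi
  simp_rw [hW]
  exact integral_add_right_eq_self (fun z => min (W μ p q f g z) t) ((-q) • η)

lemma continuous_shift {f : G → ℝ} (hf : U f) :
    Continuous fun κ : G => ∫ x, |f x - f (x + κ)| ∂μ := by
  have : Fact ((1 : ENNReal) ≠ ⊤) := ⟨by simp⟩
  have hL : MemLp f 1 μ := memLp_one_iff_integrable.mpr hf.integrable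
  have h1 : Continuous fun κ : G => ‖hL.toLp f - (DomAddAct.mk κ +ᵥ hL.toLp f)‖ := by
    have : Continuous fun κ : G => (DomAddAct.mk κ +ᵥ hL.toLp f) :=
      (continuous_vadd (M := Gᵈᵃᵃ) (X := Lp ℝ 1 μ)).comp
        ((DomAddAct.continuous_mk).prodMk continuous_const)
    exact (continuous_const.sub this).norm
  convert h1 using 2 with κ
  rw [DomAddAct.mk_vadd_toLp, ← MemLp.toLp_sub, L1.norm_eq_integral_norm]
  refine integral_congr_ae ?_
  filter_upwards [MemLp.coeFn_toLp (hL.sub (hL.comp_measurePreserving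
    (measurePreserving_vadd κ μ)))] with x hx
  refine Eq.trans ?_ (congrArg norm hx).symm
  simp [add_comm]

lemma exists_gap [PreconnectedSpace G] {f g : G → ℝ} (hf : U f) (hg : U g) {p q : ℤ}
    (hpq : p ≠ q) {t : ℝ} (ht : t ∈ Set.Icc (0:ℝ) 1) {r : ℝ} (hr0 : 0 ≤ r)
    (hr : r ≤ (∫ x, f x ∂μ) * (1 - ∫ x, f x ∂μ) / 2) :
    ∃ n u : G → ℝ, U n ∧ U u ∧ ∫ x, n x ∂μ = ∫ x, f x ∂μ - r ∧ ∫ x, u x ∂μ = ∫ x, f x ∂μ + r ∧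
      Phi μ p q g t n + Phi μ p q g t u ≤ 2 * Phi μ p q g t f := by
  set a := ∫ x, f x ∂μ with ha
  have hg' : U (fun x => 1 - f x) := ⟨measurable_const.sub hf.1, fun x =>
    ⟨by linarith [(hf.2 x).2], by linarith [(hf.2 x).1]⟩⟩
  have hh : U (fun x => f x * (1 - f x)) := hf.mul hg'
  set v := ∫ x, f x * (1 - f x) ∂μ with hv
  have hv0 : 0 ≤ v := hh.integral_mem.1
  rcases le_or_gt (a * (1 - a) / 2) v with hcase | hcase
  · obtain ⟨θ, hθ, hθr⟩ : ∃ θ ∈ Set.Icc (0:ℝ) 1, θ * v = r := by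
      rcases hv0.eq_or_lt with h | h
      · exact ⟨0, by simp, by linarith⟩
      · exact ⟨r / v, ⟨by positivity, (div_le_one h).mpr (by linarith)⟩, by field_simp⟩
    have hn : U (fun x => f x - θ * (f x * (1 - f x))) := by
      refine ⟨hf.1.sub (measurable_const.mul hh.1), fun x => ?_⟩
      have h1 := hf.2 x
      have h2 := hh.2 x
      have h3 : 0 ≤ θ * (f x * (1 - f x)) := mul_nonneg hθ.1 h2.1
      have h4 : θ * (f x * (1 - f x)) ≤ f x * (1 - f x) := mul_le_of_le_one_left h2.1 hθ.2
      constructor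
      · nlinarith [h1.1, h1.2]
      · linarith [h1.2]
    have hu : U (fun x => f x + θ * (f x * (1 - f x))) := by
      refine ⟨hf.1.add (measurable_const.mul hh.1), fun x => ?_⟩
      have h1 := hf.2 x
      have h2 := hh.2 x
      have h3 : 0 ≤ θ * (f x * (1 - f x)) := mul_nonneg hθ.1 h2.1
      have h4 : θ * (f x * (1 - f x)) ≤ f x * (1 - f x) := mul_le_of_le_one_left h2.1 hθ.2
      constructor
      · linarith [h1.1]
      · nlinarith [h1.1, h1.2, sq_nonneg (1 - f x)]
    refine ⟨_, _, hn, hu, ?_, ?_, ?_⟩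
    · rw [integral_sub hf.integrable (hh.integrable.const_mul θ), integral_const_mul, ← hv, hθr]
    · rw [integral_add hf.integrable (hh.integrable.const_mul θ), integral_const_mul, ← hv, hθr]
    · rw [two_mul]
      refine Phi_submod hf hf hn hu hg p q ht (fun x => by ring) (fun x => ?_) (fun x => ?_) <;>
      · have h3 : 0 ≤ θ * (f x * (1 - f x)) := mul_nonneg hθ.1 (hh.2 x).1
        linarith
  · have hs : ∀ κ : G, U (fun x => f (x + κ)) := fun κ => hf.comp (φ := fun x => x + κ) (by fun_prop)
    have hsi : ∀ κ : G, ∫ x, f (x + κ) ∂μ = a := fun κ => integral_add_right_eq_self f κ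
    have hff : U (fun x => f x * f x) := hf.mul hf
    have hffi : ∫ x, f x * f x ∂μ = a - v := by
      rw [ha, hv, ← integral_sub hf.integrable hh.integrable]
      congr 1; ext x; ring
    have hAU : U (fun κx : G × G => f κx.2 * f (κx.2 + κx.1)) :=
      (hf.comp (φ := fun κx : G × G => κx.2) (by fun_prop)).mul
        (hf.comp (φ := fun κx : G × G => κx.2 + κx.1) (by fun_prop))
    have hAint : ∫ κ, ∫ x, f x * f (x + κ) ∂μ ∂μ = a * a := by
      rw [integral_integral_swap hAU.integrable]
      simp_rw [integral_const_mul]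
      have : ∀ x, ∫ κ, f (x + κ) ∂μ = a := fun x => integral_add_left_eq_self f x
      simp_rw [this, integral_mul_const, ← ha]
    obtain ⟨κ₀, hκ₀⟩ : ∃ κ, ∫ x, f x * f (x + κ) ∂μ ≤ a * a := by
      rw [← hAint]
      exact exists_le_integral hAU.integrable.integral_prod_left
    have habs : ∀ κ, U (fun x => |f x - f (x + κ)|) := by
      intro κ
      refine ⟨by
        have := (hs κ).1
        exact (hf.1.sub this).abs, fun x => ⟨abs_nonneg _, ?_⟩⟩
      have h1 := hf.2 x
      have h2 := hf.2 (x + κ)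
      rw [abs_le]
      constructor <;> linarith [h1.1, h1.2, h2.1, h2.2]
    have hD : 2 * r ≤ ∫ x, |f x - f (x + κ₀)| ∂μ := by
      have hm := hf.mul (hs κ₀)
      have hss := (hs κ₀).mul (hs κ₀)
      have e1 : ∫ x, f (x + κ₀) * f (x + κ₀) ∂μ = a - v := by
        rw [← hffi]; exact integral_add_right_eq_self (fun x => f x * f x) κ₀
      have e2 : ∫ x, (f x * f x + f (x + κ₀) * f (x + κ₀) - 2 * (f x * f (x + κ₀))) ∂μ
          = (a - v) + (a - v) - 2 * ∫ x, f x * f (x + κ₀) ∂μ := by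
        rw [integral_sub (f := fun x => f x * f x + f (x + κ₀) * f (x + κ₀))
          (hff.integrable.add hss.integrable) (hm.integrable.const_mul 2),
          integral_add hff.integrable hss.integrable, integral_const_mul, hffi, e1]
      have e3 : ∫ x, (f x * f x + f (x + κ₀) * f (x + κ₀) - 2 * (f x * f (x + κ₀))) ∂μ
          ≤ ∫ x, |f x - f (x + κ₀)| ∂μ := by
        refine integral_mono ((hff.integrable.add hss.integrable).sub (hm.integrable.const_mul 2))
          (habs κ₀).integrable fun x => ?_
        have h1 := (habs κ₀).2 x
        have h2 := sq_abs (f x - f (x + κ₀))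
        simp only at h1 ⊢
        nlinarith [h1.1, h1.2]
      nlinarith
    obtain ⟨κ, hκ⟩ : ∃ κ, ∫ x, |f x - f (x + κ)| ∂μ = 2 * r :=
      mem_range_of_exists_le_of_exists_ge (continuous_shift hf)
        ⟨0, by simp; exact hr0⟩ ⟨κ₀, hD⟩
    have hn : U (fun x => min (f x) (f (x + κ))) :=
      ⟨hf.1.min (hs κ).1, fun x => ⟨le_min (hf.2 _).1 (hf.2 _).1, (min_le_left _ _).trans (hf.2 _).2⟩⟩
    have hu : U (fun x => max (f x) (f (x + κ))) :=
      ⟨hf.1.max (hs κ).1, fun x => ⟨(hf.2 _).1.trans (le_max_left _ _), max_le (hf.2 _).2 (hf.2 _).2⟩⟩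
    have i1 := hf.integrable (ν := μ)
    have i2 := (hs κ).integrable (ν := μ)
    have i3 := (habs κ).integrable (ν := μ)
    have i12 : Integrable (fun x => f x + f (x + κ)) μ := i1.add i2
    refine ⟨_, _, hn, hu, ?_, ?_, ?_⟩
    · have : ∀ x, min (f x) (f (x + κ)) = (1/2) * (f x + f (x + κ) - |f x - f (x + κ)|) := by
        intro x
        rcases le_total (f x) (f (x + κ)) with h | h
        · rw [min_eq_left h, abs_of_nonpos (by linarith)]; ring
        · rw [min_eq_right h, abs_of_nonneg (by linarith)]; ring
      simp_rw [this]
      rw [integral_const_mul, integral_sub i12 i3, integral_add i1 i2, hκ, hsi, ← ha]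
      ring
    · have : ∀ x, max (f x) (f (x + κ)) = (1/2) * (f x + f (x + κ) + |f x - f (x + κ)|) := by
        intro x
        rcases le_total (f x) (f (x + κ)) with h | h
        · rw [max_eq_right h, abs_of_nonpos (by linarith)]; ring
        · rw [max_eq_left h, abs_of_nonneg (by linarith)]; ring
      simp_rw [this]
      rw [integral_const_mul, integral_add i12 i3, integral_add i1 i2, hκ, hsi, ← ha]
      ring
    · have := Phi_submod (μ := μ) hf (hs κ) hn hu hg p q ht (fun x => (min_add_max _ _).symm)
        (fun x => min_le_left _ _) (fun x => min_le_right _ _)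
      rw [Phi_shift f g hpq t κ] at this
      linarith

lemma extremal {ι : Type*} (A c : ι → ℝ) {t s L : ℝ} (ht : 0 ≤ t) (hs : s ≤ 1)
    (hlow : ∀ i, t ≤ A i → A i ≤ s → L - (A i - t) ≤ c i ∧ L - (s - A i) ≤ c i)
    (step : ∀ i, t ≤ A i → A i ≤ s → ∃ j k, A j = A i - (A i - t) * (s - A i) / 2 ∧
      A k = A i + (A i - t) * (s - A i) / 2 ∧ c j + c k ≤ 2 * c i)
    (i : ι) (hi1 : t ≤ A i) (hi2 : A i ≤ s) : L ≤ c i := by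
  by_contra hcon
  push Not at hcon
  obtain ⟨τ, hτ⟩ : ∃ τ, τ = (L - c i) / 2 := ⟨_, rfl⟩
  have hτ0 : 0 < τ := by linarith
  let Ψ : ι → ℝ := fun j => c j + τ / 2 * ((A j - t) * (s - A j))
  let S : Set ℝ := Ψ '' {j | t ≤ A j ∧ A j ≤ s}
  have hprod : ∀ j, t ≤ A j → A j ≤ s → 0 ≤ (A j - t) * (s - A j) ∧ (A j - t) * (s - A j) ≤ 1 := by
    intro j h1 h2
    exact ⟨mul_nonneg (by linarith) (by linarith),
      mul_le_one₀ (by linarith) (by linarith) (by linarith)⟩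
  have hbdd : BddBelow S := by
    refine ⟨L - 1, ?_⟩
    rintro _ ⟨j, ⟨h1, h2⟩, rfl⟩
    have := (hlow j h1 h2).1
    have h3 := (hprod j h1 h2).1
    have h4 : 0 ≤ τ / 2 * ((A j - t) * (s - A j)) := by positivity
    simp only [Ψ]
    linarith
  have hiS : Ψ i ∈ S := ⟨i, ⟨hi1, hi2⟩, rfl⟩
  have hΨi : Ψ i < L - τ := by
    have := (hprod i hi1 hi2).2
    simp only [Ψ]
    nlinarith
  have hm : sInf S ≤ Ψ i := csInf_le hbdd hiS
  have hδ : 0 < τ * τ ^ 4 / 16 := by positivity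
  obtain ⟨_, ⟨j, ⟨h1, h2⟩, rfl⟩, hj⟩ := exists_lt_of_csInf_lt ⟨_, hiS⟩
    (show sInf S < min (sInf S + τ * τ ^ 4 / 16) (L - τ) from lt_min (by linarith) (by linarith))
  have hj1 := hj.trans_le (min_le_left _ _)
  have hj2 := hj.trans_le (min_le_right _ _)
  have hp := hprod j h1 h2
  have hcj : c j < L - τ := by
    have h4 : 0 ≤ τ / 2 * ((A j - t) * (s - A j)) := mul_nonneg (by linarith) hp.1
    simp only [Ψ] at hj2
    linarith
  have hl := hlow j h1 h2
  obtain ⟨k, l, hk, hl', hkl⟩ := step j h1 h2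
  obtain ⟨r, hr⟩ : ∃ r, r = (A j - t) * (s - A j) / 2 := ⟨_, rfl⟩
  rw [← hr] at hk hl'
  have hx : τ ≤ A j - t := by linarith
  have hy : τ ≤ s - A j := by linarith
  have hrτ : τ ^ 2 / 2 ≤ r := by rw [hr]; nlinarith
  have hrx : r ≤ A j - t := by rw [hr]; nlinarith
  have hry : r ≤ s - A j := by rw [hr]; nlinarith
  have hr0 : 0 ≤ r := by linarith [sq_nonneg τ]
  have hkS : sInf S ≤ Ψ k := csInf_le hbdd ⟨k, ⟨by linarith, by linarith⟩, rfl⟩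
  have hlS : sInf S ≤ Ψ l := csInf_le hbdd ⟨l, ⟨by linarith, by linarith⟩, rfl⟩
  have hsum : Ψ k + Ψ l ≤ 2 * Ψ j - τ * r ^ 2 := by
    simp only [Ψ, hk, hl']
    nlinarith
  have hr2 : τ ^ 4 / 4 ≤ r ^ 2 := by
    have := mul_self_le_mul_self (by positivity) hrτ
    nlinarith
  have : τ * (τ ^ 4 / 4) ≤ τ * r ^ 2 := mul_le_mul_of_nonneg_left hr2 hτ0.le
  linarith

lemma pollard [PreconnectedSpace G] {f g : G → ℝ} (hf : U f) (hg : U g) {p q : ℤ}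
    (hp : p ≠ 0) (hq : q ≠ 0) (hpq : p ≠ q) {t : ℝ} (ht : 0 ≤ t) (hta : t ≤ ∫ x, f x ∂μ)
    (htb : t ≤ ∫ x, g x ∂μ) (hab : ∫ x, f x ∂μ + ∫ x, g x ∂μ - t ≤ 1) :
    t * (∫ x, f x ∂μ + ∫ x, g x ∂μ - t) ≤ Phi μ p q g t f := by
  set b := ∫ x, g x ∂μ with hb
  have hb1 := hg.integral_mem (ν := μ)
  rw [← hb] at hb1
  have htI : t ∈ Set.Icc (0:ℝ) 1 := ⟨ht, htb.trans hb1.2⟩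
  have key := extremal (ι := {f : G → ℝ // U f}) (fun f => ∫ x, f.1 x ∂μ)
    (fun f => Phi μ p q g t f.1 - t * ∫ x, f.1 x ∂μ) (t := t) (s := 1 + t - b) (L := t * (b - t))
    ht (by linarith) ?_ ?_ ⟨f, hf⟩ hta (by simp only; linarith)
  · simp only at key
    linarith
  · rintro ⟨f, hf⟩ h1 h2
    simp only at h1 h2 ⊢
    set a := ∫ x, f x ∂μ with ha
    have hM := (hf.minW (μ := μ) hg p q htI)
    have hW := hf.W (μ := μ) hg p q
    constructor
    · have hPhi : t * b ≤ Phi μ p q g t f := by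
        have h0 : 0 ≤ Phi μ p q g t f := hM.integral_mem.1
        have h3 : t * (a * b) ≤ a * Phi μ p q g t f := by
          rw [ha, hb, ← integral_W hf hg hpq, Phi, ← integral_const_mul, ← ha,
            ← integral_const_mul]
          refine integral_mono (hW.integrable.const_mul _) (hM.integrable.const_mul _) fun z => ?_
          have h4 := W_le (μ := μ) hf hg hp q z
          rw [← ha] at h4
          have h5 := (hW.2 z).1
          simp only
          rcases min_cases (TorusKneser.W μ p q f g z) t with ⟨h, _⟩ | ⟨h, _⟩ <;> rw [h] <;> nlinarith
        rcases (ht.trans h1).eq_or_lt with h | h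
        · have : t = 0 := by linarith
          rw [this]; rw [this] at h0; simpa using h0
        · refine le_of_mul_le_mul_left ?_ h
          linarith
      nlinarith [mul_nonneg (sub_nonneg.mpr htI.2) (sub_nonneg.mpr h1)]
    · have hPhi : t - (1 + t - b - a) ≤ Phi μ p q g t f := by
        calc t - (1 + t - b - a) = ∫ z, t - (1 + t - b - a) ∂μ := by simp
          _ ≤ _ := by
            refine integral_mono (integrable_const _) hM.integrable fun z => ?_
            have := le_W (μ := μ) hf hg hp hq z
            rw [← ha, ← hb] at this
            exact le_min (by linarith) (by linarith)
      nlinarith [mul_nonneg ht (sub_nonneg.mpr h2)]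
  · rintro ⟨f, hf⟩ h1 h2
    simp only at h1 h2 ⊢
    obtain ⟨n, u, hn, hu, en, eu, h⟩ := exists_gap (μ := μ) hf hg hpq htI
      (r := (∫ x, f x ∂μ - t) * (1 + t - b - ∫ x, f x ∂μ) / 2)
      (by have := mul_nonneg (sub_nonneg.mpr h1) (sub_nonneg.mpr h2); linarith)
      (by
        have h3 := hf.integral_mem (ν := μ)
        have : (∫ x, f x ∂μ - t) * (1 + t - b - ∫ x, f x ∂μ) ≤
            (∫ x, f x ∂μ) * (1 - ∫ x, f x ∂μ) :=
          mul_le_mul (by linarith) (by linarith) (by linarith) h3.1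
        linarith)
    refine ⟨⟨n, hn⟩, ⟨u, hu⟩, en, eu, ?_⟩
    simp only [en, eu]
    linarith

lemma triple [PreconnectedSpace G] {f g h : G → ℝ} (hf : U f) (hg : U g) (hh : U h)
    {p q m : ℤ} (hp : p ≠ m) (hq : q ≠ m) (hpq : p ≠ q) {t : ℝ} (ht : 0 ≤ t)
    (hta : t ≤ ∫ x, f x ∂μ) (htb : t ≤ ∫ x, g x ∂μ) (hab : ∫ x, f x ∂μ + ∫ x, g x ∂μ - t ≤ 1) :
    t * (∫ x, f x ∂μ + ∫ x, g x ∂μ + ∫ x, h x ∂μ - 1 - t) ≤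
      ∫ x, ∫ y, f (x + p • y) * g (x + q • y) * h (x + m • y) ∂μ ∂μ := by
  have hP := pollard (μ := μ) hf hg (sub_ne_zero.mpr hp) (sub_ne_zero.mpr hq)
    (show p - m ≠ q - m from fun e => hpq (by linarith)) ht hta htb hab
  have htI : t ∈ Set.Icc (0:ℝ) 1 := ⟨ht, htb.trans hg.integral_mem.2⟩
  have e : ∫ x, ∫ y, f (x + p • y) * g (x + q • y) * h (x + m • y) ∂μ ∂μ
      = ∫ z, W μ (p - m) (q - m) f g z * h z ∂μ := by
    have hU1 : U (fun xy : G × G => f (xy.1 + p • xy.2) * g (xy.1 + q • xy.2) *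
        h (xy.1 + m • xy.2)) :=
      (hf.joint hg p q).mul (hh.comp (φ := fun zy : G × G => zy.1 + m • zy.2) (by fun_prop))
    have hU2 : U (fun xy : G × G => f (xy.1 + (p - m) • xy.2) * g (xy.1 + (q - m) • xy.2) *
        h xy.1) :=
      (hf.joint hg (p - m) (q - m)).mul (hh.comp (φ := fun zy : G × G => zy.1) (by fun_prop))
    rw [integral_integral_swap hU1.integrable]
    have h1 : ∀ y, ∫ x, f (x + p • y) * g (x + q • y) * h (x + m • y) ∂μ =
        ∫ x, f (x + (p - m) • y) * g (x + (q - m) • y) * h x ∂μ := by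
      intro y
      rw [← integral_add_right_eq_self
        (fun x => f (x + (p - m) • y) * g (x + (q - m) • y) * h x) (m • y)]
      congr 1; ext x
      have e1 : x + m • y + (p - m) • y = x + p • y := by rw [sub_smul]; abel
      have e2 : x + m • y + (q - m) • y = x + q • y := by rw [sub_smul]; abel
      rw [e1, e2]
    simp_rw [h1]
    rw [← integral_integral_swap hU2.integrable]
    simp_rw [integral_mul_const]
    rfl
  rw [e]
  have hW := hf.W (μ := μ) hg (p - m) (q - m)
  have hM := hf.minW (μ := μ) hg (p - m) (q - m) htI
  have i1 := hM.integrable (ν := μ)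
  have i2 := hh.integrable (ν := μ)
  have i3 := (hW.mul hh).integrable (ν := μ)
  have h3 : ∫ z, (min (W μ (p - m) (q - m) f g z) t + t * h z - t) ∂μ ≤
      ∫ z, W μ (p - m) (q - m) f g z * h z ∂μ := by
    refine integral_mono ((i1.add (i2.const_mul t)).sub (integrable_const t)) i3 fun z => ?_
    have h4 := hh.2 z
    have h5 := min_le_left (W μ (p - m) (q - m) f g z) t
    have h6 := min_le_right (W μ (p - m) (q - m) f g z) t
    simp only
    nlinarith [mul_le_mul_of_nonneg_right h5 h4.1,
      mul_nonneg (sub_nonneg.mpr h6) (sub_nonneg.mpr h4.2)]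
  have h4 : ∫ z, (min (W μ (p - m) (q - m) f g z) t + t * h z - t) ∂μ
      = Phi μ (p - m) (q - m) g t f + t * ∫ x, h x ∂μ - t := by
    rw [integral_sub (f := fun z => min (W μ (p - m) (q - m) f g z) t + t * h z)
      (i1.add (i2.const_mul t)) (integrable_const t), integral_add i1 (i2.const_mul t),
      integral_const_mul]
    simp [Phi]
  rw [h4] at h3
  linarith

end group
end TorusKneser

theorem stmt_16 (d : ℕ) (hd : 1 ≤ d)
    (F₁ F₂ F₃ : (Fin d → AddCircle (1 : ℝ)) → ℝ)
    (hm₁ : Measurable F₁) (hm₂ : Measurable F₂) (hm₃ : Measurable F₃)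
    (hr₁ : ∀ x, F₁ x ∈ Set.Icc (0 : ℝ) 1) (hr₂ : ∀ x, F₂ x ∈ Set.Icc (0 : ℝ) 1)
    (hr₃ : ∀ x, F₃ x ∈ Set.Icc (0 : ℝ) 1)
    (δ₁ δ₂ δ₃ δ : ℝ)
    (hδ₁ : δ₁ = ∫ x, F₁ x ∂(torusMeasure d))
    (hδ₂ : δ₂ = ∫ x, F₂ x ∂(torusMeasure d))
    (hδ₃ : δ₃ = ∫ x, F₃ x ∂(torusMeasure d))
    (hδ : δ = min δ₁ (min δ₂ δ₃))
    (m₁ m₂ m₃ : ℤ) (h12 : m₁ ≠ m₂) (h13 : m₁ ≠ m₃) (h23 : m₂ ≠ m₃) :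
    (δ₁ + δ₂ + δ₃ ≤ 1 + 2 * δ →
      (1 / 4) * max (δ₁ + δ₂ + δ₃ - 1) 0 ^ 2 ≤
        ∫ x, ∫ y, F₁ (x + m₁ • y) * F₂ (x + m₂ • y) * F₃ (x + m₃ • y)
          ∂(torusMeasure d) ∂(torusMeasure d)) ∧
    (1 + 2 * δ < δ₁ + δ₂ + δ₃ →
      δ * (δ₁ + δ₂ + δ₃ - 1 - δ) ≤
        ∫ x, ∫ y, F₁ (x + m₁ • y) * F₂ (x + m₂ • y) * F₃ (x + m₃ • y)
          ∂(torusMeasure d) ∂(torusMeasure d)) := by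
  have hH : (torusMeasure d).IsAddHaarMeasure := by unfold torusMeasure; infer_instance
  have hPr1 : IsProbabilityMeasure (volume : Measure (AddCircle (1:ℝ))) := ⟨by simp⟩
  have hPr : IsProbabilityMeasure (torusMeasure d) := by unfold torusMeasure; infer_instance
  have U1 : TorusKneser.U F₁ := ⟨hm₁, hr₁⟩
  have U2 : TorusKneser.U F₂ := ⟨hm₂, hr₂⟩
  have U3 : TorusKneser.U F₃ := ⟨hm₃, hr₃⟩
  have b1 := U1.integral_mem (ν := torusMeasure d)
  have b2 := U2.integral_mem (ν := torusMeasure d)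
  have b3 := U3.integral_mem (ν := torusMeasure d)
  have T := fun t => TorusKneser.triple (μ := torusMeasure d) U1 U2 U3 h13 h23 h12 (t := t)
  have T' := fun t => TorusKneser.triple (μ := torusMeasure d) U1 U3 U2 h12 h23.symm h13 (t := t)
  rw [← hδ₁] at b1
  rw [← hδ₂] at b2
  rw [← hδ₃] at b3
  rw [← hδ₁, ← hδ₂, ← hδ₃] at T T'
  have l1 : δ ≤ δ₁ := hδ ▸ min_le_left _ _
  have l2 : δ ≤ δ₂ := hδ ▸ (min_le_right _ _).trans (min_le_left _ _)
  have l3 : δ ≤ δ₃ := hδ ▸ (min_le_right _ _).trans (min_le_right _ _)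
  constructor
  · intro h
    rcases le_or_gt (δ₁ + δ₂ + δ₃ - 1) 0 with h0 | h0
    · rw [max_eq_right h0]
      simp only [ne_eq, OfNat.ofNat_ne_zero, not_false_eq_true, zero_pow, mul_zero]
      exact integral_nonneg fun x => integral_nonneg fun y =>
        mul_nonneg (mul_nonneg (hr₁ _).1 (hr₂ _).1) (hr₃ _).1
    · rw [max_eq_left h0.le]
      refine le_trans (le_of_eq ?_) (T ((δ₁ + δ₂ + δ₃ - 1) / 2) (by linarith) (by linarith)
        (by linarith) (by linarith))
      ring
  · intro h
    have hd0 : 0 ≤ δ := by rw [hδ]; exact le_min b1.1 (le_min b2.1 b3.1)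
    rcases le_or_gt (δ₁ + δ₂ - δ) 1 with hc | hc
    · exact T δ hd0 l1 l2 hc
    · have hc' : δ₁ + δ₃ - δ ≤ 1 := by
        rcases min_choice δ₁ (min δ₂ δ₃) with e | e
        · linarith [b3.2]
        · rcases min_choice δ₂ δ₃ with e' | e'
          · linarith [b1.2]
          · linarith [b1.2]
      have := T' δ hd0 l1 l3 hc'
      refine le_trans (le_of_eq (by ring)) (this.trans (le_of_eq ?_))
      congr 1; ext x; congr 1; ext y; ring
end

section
/- Let m ≥ 3 be a natural number. Then there exist a₁, …, a_{m²} ∈ ℝ/ℤ such that the strips S_i := {(x,y) ∈ (ℝ/ℤ)² : x + i·y ∈ a_i + [0, 2/m] mod 1} for i = 1, …, m² cover the entire torus (ℝ/ℤ)². -/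
open Filter
open scoped Classical

theorem stmt_17 (m : ℕ) (hm : 3 ≤ m) :
    ∃ a : Fin (m ^ 2) → AddCircle (1 : ℝ),
      ∀ x y : AddCircle (1 : ℝ), ∃ i : Fin (m ^ 2),
        ∃ t : ℝ, t ∈ Set.Icc (0 : ℝ) (2 / (m : ℝ)) ∧
          x + ((i : ℕ) + 1) • y = a i + (t : AddCircle (1 : ℝ)) := by
  have hm0 : (0 : ℝ) < m := by exact_mod_cast (by omega : 0 < m)
  have hmn : 0 < m := by omega
  refine ⟨fun i => ((((i : ℕ) % m : ℕ) * (((i : ℕ) / m : ℕ) / (m : ℝ)) : ℝ) : AddCircle (1 : ℝ)), ?_⟩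
  intro x y
  obtain ⟨u, rfl⟩ := QuotientAddGroup.mk_surjective x
  obtain ⟨v, rfl⟩ := QuotientAddGroup.mk_surjective y
  -- choose the block
  obtain ⟨K, hK⟩ : ∃ K : ℤ, K = ⌊(m : ℝ) * v⌋ + 2 := ⟨_, rfl⟩
  obtain ⟨k, hk⟩ : ∃ k : ℕ, (k : ℤ) = K % m :=
    ⟨(K % m).toNat, Int.toNat_of_nonneg (Int.emod_nonneg _ (by omega))⟩
  have hkm : k < m := by
    have := Int.emod_lt_of_pos K (by omega : (0 : ℤ) < m)
    omega
  obtain ⟨q, hq⟩ : ∃ q : ℤ, K = k + m * q := ⟨K / m, by rw [hk]; exact (Int.emod_add_mul_ediv K m).symm⟩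
  have hqR : (K : ℝ) = k + m * q := by exact_mod_cast hq
  obtain ⟨s, hs⟩ : ∃ s : ℝ, s = K / m - v := ⟨_, rfl⟩
  have hKR : (K : ℝ) = ⌊(m : ℝ) * v⌋ + 2 := by rw [hK]; push_cast; rfl
  have hms : m * s = K - m * v := by rw [hs]; field_simp
  have f1 := Int.floor_le ((m : ℝ) * v)
  have f2 := Int.lt_floor_add_one ((m : ℝ) * v)
  have hs1 : 1 < m * s := by linarith
  have hs2 : s ≤ 2 / m := by rw [le_div_iff₀ hm0]; linarith
  have hs0 : 0 < s := by
    by_contra h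
    nlinarith
  have hkv : (k : ℝ) / m = v + s - q := by
    rw [hs, hqR]; field_simp; ring
  -- representative in [0,1)
  obtain ⟨z, hz⟩ : ∃ z : ℝ, z = Int.fract (u + (k * m + 1) * v) := ⟨_, rfl⟩
  have hz0 : 0 ≤ z := hz ▸ Int.fract_nonneg _
  have hz1 : z < 1 := hz ▸ Int.fract_lt_one _
  have hzf : z = u + (k * m + 1) * v - ⌊u + (k * m + 1) * v⌋ := hz
  generalize ⌊u + (k * m + 1) * v⌋ = N at hzf
  have hj : ∃ j : ℕ, j < m ∧ 0 ≤ z - j * s ∧ z - j * s ≤ 2 / m := by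
    have g1 : (⌊z / s⌋₊ : ℝ) * s ≤ z := by
      rw [← le_div_iff₀ hs0]; exact Nat.floor_le (by positivity)
    have g2 : z < ((⌊z / s⌋₊ : ℝ) + 1) * s := by
      rw [← div_lt_iff₀ hs0]; exact Nat.lt_floor_add_one _
    refine ⟨⌊z / s⌋₊, ?_, by linarith, by linarith⟩
    rw [Nat.floor_lt (by positivity), div_lt_iff₀ hs0]
    linarith
  obtain ⟨j, hjm, hj0, hj2⟩ := hj
  have hi : k * m + j < m ^ 2 := by nlinarith
  refine ⟨⟨k * m + j, hi⟩, z - j * s, ⟨hj0, hj2⟩, ?_⟩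
  have e1 : (k * m + j) % m = j := by
    rw [add_comm, Nat.add_mul_mod_self_right, Nat.mod_eq_of_lt hjm]
  have e2 : (k * m + j) / m = k := by
    rw [add_comm, Nat.add_mul_div_right _ _ hmn, Nat.div_eq_of_lt hjm, zero_add]
  simp only [e1, e2]
  rw [hkv]
  change ((u : ℝ) : AddCircle (1:ℝ)) + (k * m + j + 1) • ((v : ℝ) : AddCircle (1:ℝ)) = _
  rw [← AddCircle.coe_nsmul, ← AddCircle.coe_add, ← AddCircle.coe_add]
  rw [← sub_eq_zero, ← AddCircle.coe_sub, AddCircle.coe_eq_zero_iff]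
  refine ⟨N + j * q, ?_⟩
  rw [hzf]
  simp only [nsmul_eq_mul, zsmul_eq_mul]
  push_cast
  ring
end
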